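/- arXiv:1805.02072 — 2 statements merged into one kernel-verified Lean document; each statement's English description precedes it below -/
import Mathlib

section
/- Let T be a non-degenerate triangle in the plane and let ε > 0 be smaller than every angle of T. Then there exists a real number L ≥ 1/24 such that the sequence h(n, T, ε)/n³ converges to L as n → ∞, and moreover for every natural number n one has L·(n³ − n) ≥ h(n, T, ε) ≥ L·n·(n − 1)·(n − 2). -/
open EuclideanGeometry

noncomputable section

abbrev Plane := EuclideanSpace ℝ (Fin 2)

/-- A triple of points is a (non-degenerate) triangle if its points are not collinear. -/
def IsTriangle (p : Fin 3 → Plane) : Prop := ¬ Collinear ℝ (Set.range p)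

/-- The angle of the triple `p` at its `i`-th vertex. -/
noncomputable def triAngle (p : Fin 3 → Plane) (i : Fin 3) : ℝ :=
  EuclideanGeometry.angle (p (i + 1)) (p i) (p (i + 2))

/-- `p` is ε-similar to `T`: some correspondence of vertices makes corresponding
angles differ by less than ε. -/
def EpsSimilar (ε : ℝ) (p T : Fin 3 → Plane) : Prop :=
  ∃ σ : Equiv.Perm (Fin 3), ∀ i, |triAngle p i - triAngle T (σ i)| < ε

/-- The finite set `S` forms a triangle ε-similar to `T`. -/
def FormsSimilar (ε : ℝ) (T : Fin 3 → Plane) (S : Finset Plane) : Prop :=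
  ∃ p : Fin 3 → Plane, (S : Set Plane) = Set.range p ∧ IsTriangle p ∧ EpsSimilar ε p T

/-- The number of 3-element subsets of `P` forming a triangle ε-similar to `T`. -/
noncomputable def simCount (ε : ℝ) (T : Fin 3 → Plane) (P : Finset Plane) : ℕ :=
  Set.ncard {S : Finset Plane | S ⊆ P ∧ S.card = 3 ∧ FormsSimilar ε T S}

/-- `hGeo n T ε` = maximum over `n`-point sets `P` of the number of 3-element
subsets of `P` forming a triangle ε-similar to `T`. -/
noncomputable def hGeo (n : ℕ) (T : Fin 3 → Plane) (ε : ℝ) : ℕ :=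
  sSup {m | ∃ P : Finset Plane, P.card = n ∧ simCount ε T P = m}

/-- The recurrence defining the sequence `h`. -/
def HRec (h : ℕ → ℕ) : Prop :=
  h 0 = 0 ∧ h 1 = 0 ∧ h 2 = 0 ∧
  ∀ n, 3 ≤ n → IsGreatest
    {m | ∃ a b c : ℕ, a + b + c = n ∧ a ≤ n - 1 ∧ b ≤ n - 1 ∧ c ≤ n - 1 ∧
      m = a * b * c + h a + h b + h c} (h n)

/-!
The extremal function `h` satisfies two inequalities. Deleting a point from an extremal
configuration and averaging over the deleted point gives `(n - 2) h(n + 1) ≤ (n + 1) h(n)`, so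
`h(n) / (n (n - 1) (n - 2))` is nonincreasing; it therefore converges, to its infimum `L`.
Conversely, since being `ε`-similar to `T` is an open condition, each point of an extremal `n`-point
configuration can be replaced by a tiny copy of an extremal `m`-point configuration, so
`h(n) m³ + n h(m) ≤ h(n m)`. Dividing by `m³` and letting `m → ∞` yields `h(n) + n L ≤ n³ L`.
For `n = 3` the triangle `T` itself gives `h(3) ≥ 1`, so `L ≥ 1 / (3³ - 3)`.

The argument only uses that the triples in question form an open set of injective triples which is
invariant under translations and positive scalings.
-/

section Sequences

open Filter Topology

variable {k : ℕ} {h : ℕ → ℝ}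

lemma tendsto_descFactorial_div_pow (k : ℕ) :
    Tendsto (fun n : ℕ ↦ (n.descFactorial k : ℝ) / (n : ℝ) ^ k) atTop (𝓝 1) := by
  refine (Asymptotics.isEquivalent_iff_tendsto_one ?_).1 (isEquivalent_descFactorial k)
  filter_upwards [eventually_ne_atTop 0] with n hn
  positivity

lemma div_descFactorial_succ_le {n : ℕ} (hn : k ≤ n)
    (h_avg : ((n + 1 - k : ℕ) : ℝ) * h (n + 1) ≤ (n + 1) * h n) :
    h (n + 1) / (n + 1).descFactorial k ≤ h n / n.descFactorial k := by
  have pos_of_le {m : ℕ} (hm : k ≤ m) : (0 : ℝ) < m.descFactorial k := by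
    exact_mod_cast Nat.descFactorial_pos.2 hm
  have descFactorial_succ : ((n + 1 - k : ℕ) : ℝ) * (n + 1).descFactorial k
      = (n + 1) * n.descFactorial k := by
    exact_mod_cast Nat.succ_descFactorial n k
  have sub_pos : (0 : ℝ) < (n + 1 - k : ℕ) := by
    exact_mod_cast Nat.sub_pos_of_lt (Nat.lt_succ_of_le hn)
  rw [div_le_div_iff₀ (pos_of_le (hn.trans n.le_succ)) (pos_of_le hn)]
  refine le_of_mul_le_mul_left ?_ sub_pos
  calc ((n + 1 - k : ℕ) : ℝ) * (h (n + 1) * n.descFactorial k)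
      = ((n + 1 - k : ℕ) : ℝ) * h (n + 1) * n.descFactorial k := by ring
    _ ≤ (n + 1) * h n * n.descFactorial k := by gcongr
    _ = h n * ((n + 1) * n.descFactorial k) := by ring
    _ = ((n + 1 - k : ℕ) : ℝ) * (h n * (n + 1).descFactorial k) := by
      rw [← descFactorial_succ]; ring

lemma exists_tendsto_div_pow_of_averaging (h_nonneg : ∀ n, 0 ≤ h n)
    (h_avg : ∀ n : ℕ, ((n + 1 - k : ℕ) : ℝ) * h (n + 1) ≤ (n + 1) * h n) :
    ∃ L : ℝ, Tendsto (fun n : ℕ ↦ h n / (n : ℝ) ^ k) atTop (𝓝 L) ∧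
      ∀ n : ℕ, L * n.descFactorial k ≤ h n := by
  have density_antitone : Antitone fun n ↦ h (n + k) / (n + k).descFactorial k :=
    antitone_add_nat_of_succ_le (f := fun n ↦ h n / n.descFactorial k)
      fun n hn ↦ div_descFactorial_succ_le hn (h_avg n)
  have density_bddBelow :
      BddBelow (Set.range fun n ↦ h (n + k) / (n + k).descFactorial k) :=
    ⟨0, Set.forall_mem_range.2 fun n ↦ div_nonneg (h_nonneg _) (Nat.cast_nonneg _)⟩
  refine ⟨⨅ n, h (n + k) / (n + k).descFactorial k, ?_, fun n ↦ ?_⟩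
  · have density_tendsto := (tendsto_add_atTop_iff_nat (f := fun n ↦ h n / n.descFactorial k) k).1
      (tendsto_atTop_ciInf density_antitone density_bddBelow)
    have product_tendsto := density_tendsto.mul (tendsto_descFactorial_div_pow k)
    rw [mul_one] at product_tendsto
    refine product_tendsto.congr' ?_
    filter_upwards [eventually_ge_atTop k] with n hn
    have : (n.descFactorial k : ℝ) ≠ 0 := by exact_mod_cast (Nat.descFactorial_pos.2 hn).ne'
    exact div_mul_div_cancel₀ this
  · rcases lt_or_ge n k with hn | hn
    · simpa [Nat.descFactorial_of_lt hn] using h_nonneg n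
    · obtain ⟨m, rfl⟩ := Nat.exists_eq_add_of_le' hn
      rw [← le_div_iff₀ (by exact_mod_cast Nat.descFactorial_pos.2 hn)]
      exact ciInf_le density_bddBelow m

lemma le_mul_pow_sub_of_blowup {L : ℝ} (hk : k ≠ 0)
    (h_tendsto : Tendsto (fun n : ℕ ↦ h n / (n : ℝ) ^ k) atTop (𝓝 L))
    (h_blowup : ∀ n m : ℕ, h n * (m : ℝ) ^ k + n * h m ≤ h (n * m)) (n : ℕ) :
    h n ≤ L * ((n : ℝ) ^ k - n) := by
  rcases Nat.eq_zero_or_pos n with rfl | hn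
  · have two_le_pow : (2 : ℝ) ≤ 2 ^ k := le_self_pow₀ one_le_two hk
    have blowup_zero_two := h_blowup 0 2
    simp only [Nat.cast_zero, Nat.cast_ofNat, zero_mul, add_zero] at blowup_zero_two
    simp only [Nat.cast_zero, zero_pow hk, sub_zero, mul_zero]
    nlinarith
  · have : (0 : ℝ) < n := by exact_mod_cast hn
    have lhs_tendsto := (h_tendsto.const_mul (n : ℝ)).const_add (h n)
    have rhs_tendsto := (h_tendsto.comp (tendsto_id.const_mul_atTop' hn)).mul_const ((n : ℝ) ^ k)
    have limit_le : h n + n * L ≤ L * (n : ℝ) ^ k := by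
      refine le_of_tendsto_of_tendsto lhs_tendsto rhs_tendsto ?_
      filter_upwards [eventually_gt_atTop 0] with m hm
      have : (0 : ℝ) < m := by exact_mod_cast hm
      calc h n + n * (h m / (m : ℝ) ^ k)
          = (h n * (m : ℝ) ^ k + n * h m) / (m : ℝ) ^ k := by field_simp
        _ ≤ h (n * m) / (m : ℝ) ^ k := by gcongr; exact h_blowup n m
        _ = h (n * m) / ((n * m : ℕ) : ℝ) ^ k * (n : ℝ) ^ k := by
          rw [Nat.cast_mul, mul_pow]
          field_simp
    linarith

end Sequences

section SetFamilies

open Finset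

variable {α γ : Type*} {k : ℕ}

open scoped Classical in
/-- The members of the set family `F` contained in `P`: the edges of the hypergraph `F` that are
induced on the vertex set `P`. -/
def inducedEdges (F : Set (Finset α)) (P : Finset α) : Finset (Finset α) :=
  {S ∈ P.powerset | S ∈ F}

/-- The largest number of members of `F` contained in a common `n`-point set. As a supremum in `ℕ`,
it is `0` when there are no `n`-point sets. -/
def maxInducedEdges (F : Set (Finset α)) (n : ℕ) : ℕ :=
  sSup {m | ∃ P : Finset α, #P = n ∧ #(inducedEdges F P) = m}

variable {F : Set (Finset α)}

lemma mem_inducedEdges {P S : Finset α} : S ∈ inducedEdges F P ↔ S ⊆ P ∧ S ∈ F := by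
  simp [inducedEdges]

lemma bddAbove_card_inducedEdges (F : Set (Finset α)) (n : ℕ) :
    BddAbove {m | ∃ P : Finset α, #P = n ∧ #(inducedEdges F P) = m} := by
  refine ⟨2 ^ n, ?_⟩
  rintro _ ⟨P, rfl, rfl⟩
  rw [← card_powerset]
  exact card_le_card fun S hS ↦ mem_powerset.2 (mem_inducedEdges.1 hS).1

lemma card_inducedEdges_le_maxInducedEdges (F : Set (Finset α)) (P : Finset α) :
    #(inducedEdges F P) ≤ maxInducedEdges F #P :=
  le_csSup (bddAbove_card_inducedEdges F _) ⟨P, rfl, rfl⟩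

lemma exists_card_inducedEdges_eq_maxInducedEdges [Infinite α] (F : Set (Finset α)) (n : ℕ) :
    ∃ P : Finset α, #P = n ∧ #(inducedEdges F P) = maxInducedEdges F n := by
  obtain ⟨P, hP⟩ := Infinite.exists_subset_card_eq α n
  have attained : {m | ∃ P : Finset α, #P = n ∧ #(inducedEdges F P) = m}.Nonempty :=
    ⟨_, P, hP, rfl⟩
  exact Nat.sSup_mem attained (bddAbove_card_inducedEdges F n)

lemma card_le_maxInducedEdges_of_injOn [DecidableEq α] {f : γ → α} {R : Finset γ}
    {E : Finset (Finset γ)} (hf : Set.InjOn f R) (hER : ∀ U ∈ E, U ⊆ R)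
    (hEF : ∀ U ∈ E, U.image f ∈ F) : #E ≤ maxInducedEdges F #R := by
  rw [← card_image_of_injOn hf]
  refine le_trans ?_ (card_inducedEdges_le_maxInducedEdges F _)
  refine card_le_card_of_injOn (image f) (fun U hU ↦ ?_)
    ((image_injOn_powerset_of_injOn hf).mono fun U hU ↦ ?_)
  · exact mem_inducedEdges.2 ⟨image_subset_image (hER U hU), hEF U hU⟩
  · exact mem_powerset.2 (hER U hU)

lemma one_le_maxInducedEdges_of_mem {S : Finset α} (hS : S ∈ F) :
    1 ≤ maxInducedEdges F #S :=
  (Nat.succ_le_of_lt (card_pos.2 ⟨S, mem_inducedEdges.2 ⟨Subset.rfl, hS⟩⟩)).trans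
    (card_inducedEdges_le_maxInducedEdges F S)

/-- Double counting of the pairs of an edge in an extremal `(n + 1)`-point set and a point outside
that edge. -/
lemma sub_mul_maxInducedEdges_succ_le [Infinite α] (hF : F.Sized k) (n : ℕ) :
    (n + 1 - k) * maxInducedEdges F (n + 1) ≤ (n + 1) * maxInducedEdges F n := by
  classical
  obtain ⟨P, hP, hPmax⟩ := exists_card_inducedEdges_eq_maxInducedEdges F (n + 1)
  have edges_avoiding_le : ∀ x ∈ P,
      #((inducedEdges F P).bipartiteAbove (fun x S ↦ x ∉ S) x) ≤ maxInducedEdges F n := by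
    intro x hx
    have hPx : #(P.erase x) = n := by rw [card_erase_of_mem hx, hP, Nat.add_sub_cancel]
    rw [← hPx]
    refine (card_le_card fun S hS ↦ ?_).trans (card_inducedEdges_le_maxInducedEdges F _)
    obtain ⟨hS, hxS⟩ := (mem_bipartiteAbove _).1 hS
    obtain ⟨hSP, hSF⟩ := mem_inducedEdges.1 hS
    exact mem_inducedEdges.2 ⟨subset_erase.2 ⟨hSP, hxS⟩, hSF⟩
  have card_points_outside : ∀ S ∈ inducedEdges F P,
      n + 1 - k ≤ #(P.bipartiteBelow (fun x S ↦ x ∉ S) S) := by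
    intro S hS
    obtain ⟨hSP, hSF⟩ := mem_inducedEdges.1 hS
    rw [bipartiteBelow, filter_notMem_eq_sdiff, card_sdiff_of_subset hSP, hP, hF hSF]
  have double_count := card_mul_le_card_mul' _ card_points_outside edges_avoiding_le
  rwa [hP, hPmax, mul_comm] at double_count

end SetFamilies

section BlowUp

open Finset

variable {α β : Type*} [DecidableEq α] [DecidableEq β]

/-- The graphs of the functions from `S` to `Q`, that is, the sets obtained by choosing one point
in each column `{a} × Q` with `a ∈ S`. -/
def transversals (S : Finset α) (Q : Finset β) : Finset (Finset (α × β)) :=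
  univ.image fun g : S → Q ↦ univ.image fun a : S ↦ ((a : α), (g a : β))

/-- The edges of the blow-up of the hypergraph `E₁` on `P`, in which every vertex is replaced by a
copy of the hypergraph `E₂` on `Q`: the transversals of the edges of `E₁`, together with a copy of
`E₂` in each column. -/
def blowupEdges (P : Finset α) (E₁ : Finset (Finset α)) (Q : Finset β) (E₂ : Finset (Finset β)) :
    Finset (Finset (α × β)) :=
  E₁.biUnion (transversals · Q) ∪ (P ×ˢ E₂).image fun x ↦ {x.1} ×ˢ x.2

variable {S P : Finset α} {Q : Finset β} {U : Finset (α × β)}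
  {E₁ : Finset (Finset α)} {E₂ : Finset (Finset β)}

lemma mem_transversals : U ∈ transversals S Q ↔
    ∃ g : S → Q, univ.image (fun a : S ↦ ((a : α), (g a : β))) = U := by
  simp [transversals]

lemma mem_blowupEdges : U ∈ blowupEdges P E₁ Q E₂ ↔
    (∃ S ∈ E₁, U ∈ transversals S Q) ∨ ∃ p ∈ P, ∃ S ∈ E₂, {p} ×ˢ S = U := by
  simp [blowupEdges, and_assoc]

lemma card_transversals (S : Finset α) (Q : Finset β) : #(transversals S Q) = #Q ^ #S := by
  have graph_injective : Function.Injective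
      fun g : S → Q ↦ univ.image fun a : S ↦ ((a : α), (g a : β)) := by
    intro g g' hgg'
    funext a
    have graph_mem : ((a : α), (g a : β)) ∈ univ.image fun a : S ↦ ((a : α), (g' a : β)) :=
      hgg'.subset (mem_image_of_mem _ (mem_univ a))
    obtain ⟨b, -, hb⟩ := mem_image.1 graph_mem
    obtain ⟨hba, hgb⟩ := Prod.mk.inj hb
    rw [Subtype.ext hba] at hgb
    exact (Subtype.ext hgb).symm
  rw [transversals, card_image_of_injective _ graph_injective]
  simp

lemma image_fst_of_mem_transversals (hU : U ∈ transversals S Q) : U.image Prod.fst = S := by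
  obtain ⟨g, rfl⟩ := mem_transversals.1 hU
  simp [image_image, Function.comp_def]

lemma subset_product_of_mem_transversals (hU : U ∈ transversals S Q) : U ⊆ S ×ˢ Q := by
  obtain ⟨g, rfl⟩ := mem_transversals.1 hU
  simp [image_subset_iff]

lemma subset_product_of_mem_blowupEdges (hE₁ : ∀ S ∈ E₁, S ⊆ P) (hE₂ : ∀ S ∈ E₂, S ⊆ Q)
    (hU : U ∈ blowupEdges P E₁ Q E₂) : U ⊆ P ×ˢ Q := by
  obtain ⟨S, hS, hU⟩ | ⟨p, hp, S, hS, rfl⟩ := mem_blowupEdges.1 hU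
  · exact (subset_product_of_mem_transversals hU).trans (product_subset_product_left (hE₁ S hS))
  · exact product_subset_product (singleton_subset_iff.2 hp) (hE₂ S hS)

/-- The projection to `α` tells the edges apart: it maps a transversal of `S` onto `S`, and an edge
inside a column onto a single point. -/
lemma card_blowupEdges {k : ℕ} (hk : k ≠ 1) (hE₁ : (E₁ : Set (Finset α)).Sized k)
    (hE₂ : ∀ S ∈ E₂, S.Nonempty) :
    #(blowupEdges P E₁ Q E₂) = #E₁ * #Q ^ k + #P * #E₂ := by
  have transversals_disjoint : (E₁ : Set (Finset α)).PairwiseDisjoint (transversals · Q) :=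
    fun S _ S' _ hSS' ↦ disjoint_left.2 fun U hU hU' ↦
      hSS' ((image_fst_of_mem_transversals hU).symm.trans (image_fst_of_mem_transversals hU'))
  have column_injOn : Set.InjOn (fun x : α × Finset β ↦ ({x.1} : Finset α) ×ˢ x.2)
      (P ×ˢ E₂ : Finset (α × Finset β)) := by
    rintro ⟨p, S⟩ hS ⟨p', S'⟩ hS' hSS'
    have hS := hE₂ S (mem_product.1 hS).2
    have hS' := hE₂ S' (mem_product.1 hS').2
    have fst_eq := congrArg (image Prod.fst) hSS'
    have snd_eq := congrArg (image Prod.snd) hSS'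
    simp only [product_image_fst hS, product_image_fst hS', singleton_inj] at fst_eq
    simp only [product_image_snd (singleton_nonempty _)] at snd_eq
    rw [fst_eq, snd_eq]
  have columns_disjoint : Disjoint (E₁.biUnion (transversals · Q))
      ((P ×ˢ E₂).image fun x ↦ {x.1} ×ˢ x.2) := by
    refine disjoint_left.2 fun U hU hU' ↦ hk ?_
    obtain ⟨S, hS, hU⟩ := mem_biUnion.1 hU
    obtain ⟨⟨p, S'⟩, hS', rfl⟩ := mem_image.1 hU'
    rw [← hE₁ hS, ← image_fst_of_mem_transversals hU,
      product_image_fst (hE₂ S' (mem_product.1 hS').2), card_singleton]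
  rw [blowupEdges, card_union_of_disjoint columns_disjoint, card_biUnion transversals_disjoint,
    card_image_of_injOn column_injOn, card_product]
  congr 1
  refine sum_const_nat fun S hS ↦ ?_
  rw [card_transversals, hE₁ hS]

end BlowUp

section StablePatterns

open Finset Filter Topology

variable {α V : Type*} {k : ℕ}

/-- The finite sets whose points, in some order, form a tuple belonging to `G`. -/
def copies (G : Set (Fin k → α)) : Set (Finset α) :=
  {S | ∃ p ∈ G, (S : Set α) = Set.range p}

lemma image_univ_mem_copies [DecidableEq α] {G : Set (Fin k → α)} {p : Fin k → α} (hp : p ∈ G) :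
    univ.image p ∈ copies G :=
  ⟨p, hp, by simp⟩

lemma sized_copies {G : Set (Fin k → α)} (hG : ∀ p ∈ G, Function.Injective p) :
    (copies G).Sized k := by
  rintro S ⟨p, hp, hSp⟩
  rw [← Set.ncard_coe_finset, hSp, Set.ncard_range_of_injective (hG p hp), Nat.card_fin]

variable [AddCommGroup V] [Module ℝ V]

/-- The map placing a copy of the space scaled by `δ` around each point: `blowupMap δ (p, q)` is
the point at position `q` in the copy around `p`. -/
def blowupMap (δ : ℝ) (x : V × V) : V := x.1 + δ • x.2

lemma image_blowupMap_column_mem_copies [DecidableEq V] {G : Set (Fin k → V)} {a : V} {δ : ℝ}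
    (hG : ∀ p ∈ G, (fun i ↦ a + δ • p i) ∈ G) {S : Finset V} (hS : S ∈ copies G) :
    ({a} ×ˢ S).image (blowupMap δ) ∈ copies G := by
  obtain ⟨p, hp, hSp⟩ := hS
  refine ⟨_, hG p hp, ?_⟩
  simp only [singleton_product, coe_image, coe_map, hSp, ← Set.range_comp]
  rfl

variable [TopologicalSpace V]

/-- A kind of configuration of `k` labelled points which, like being a triangle `ε`-similar to `T`,
consists of tuples of distinct points, survives small perturbations, and is invariant under
translations and positive scalings. -/
structure IsStablePattern (G : Set (Fin k → V)) : Prop where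
  isOpen : IsOpen G
  injective : ∀ p ∈ G, Function.Injective p
  add_smul_mem : ∀ p ∈ G, ∀ (a : V) (δ : ℝ), 0 < δ → (fun i ↦ a + δ • p i) ∈ G

variable [ContinuousAdd V] [ContinuousSMul ℝ V] {G : Set (Fin k → V)}

lemma eventually_injOn_blowupMap [T2Space V] (P Q : Finset V) :
    ∀ᶠ δ : ℝ in 𝓝[>] 0, Set.InjOn (blowupMap δ) ((P ×ˢ Q : Finset (V × V)) : Set (V × V)) := by
  have separated (x y : V × V) (hxy : x ≠ y) :
      ∀ᶠ δ : ℝ in 𝓝[>] 0, blowupMap δ x ≠ blowupMap δ y := by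
    by_cases hfst : x.1 = y.1
    · filter_upwards [self_mem_nhdsWithin] with δ hδ heq
      have hsnd : x.2 = y.2 := by
        simpa [blowupMap, hfst, (Set.mem_Ioi.1 hδ).ne'] using heq
      exact hxy (Prod.ext hfst hsnd)
    · have blowupMap_continuous (z : V × V) : Continuous fun δ : ℝ ↦ blowupMap δ z := by
        unfold blowupMap
        fun_prop
      refine nhdsWithin_le_nhds ((isOpen_ne_fun (blowupMap_continuous x)
        (blowupMap_continuous y)).mem_nhds ?_)
      simpa [blowupMap] using hfst
  have all_separated : ∀ᶠ δ : ℝ in 𝓝[>] 0, ∀ x ∈ P ×ˢ Q, ∀ y ∈ P ×ˢ Q,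
      x ≠ y → blowupMap δ x ≠ blowupMap δ y := by
    simp only [eventually_all_finset, eventually_imp_distrib_left]
    exact fun x _ y _ ↦ separated x y
  filter_upwards [all_separated] with δ hδ x hx y hy heq
  exact not_imp_not.1 (hδ x hx y hy) heq

lemma eventually_add_smul_mem (hG : IsOpen G) {p : Fin k → V} (hp : p ∈ G) (Q : Finset V) :
    ∀ᶠ δ : ℝ in 𝓝 0, ∀ g : Fin k → Q, (fun i ↦ p i + δ • (g i : V)) ∈ G := by
  refine eventually_all.2 fun g ↦ ?_
  have perturbation_continuous : Continuous fun δ : ℝ ↦ fun i ↦ p i + δ • (g i : V) := by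
    fun_prop
  exact (hG.preimage perturbation_continuous).mem_nhds (by simpa using hp)

lemma eventually_image_blowupMap_transversal_mem_copies [DecidableEq V] (hG : IsOpen G)
    {S : Finset V} (hS : S ∈ copies G) (Q : Finset V) :
    ∀ᶠ δ : ℝ in 𝓝 0, ∀ U ∈ transversals S Q, U.image (blowupMap δ) ∈ copies G := by
  obtain ⟨p, hp, hSp⟩ := hS
  have p_mem (i : Fin k) : p i ∈ S := mem_coe.1 (hSp ▸ Set.mem_range_self i)
  filter_upwards [eventually_add_smul_mem hG hp Q] with δ hδ U hU
  obtain ⟨g, rfl⟩ := mem_transversals.1 hU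
  refine ⟨_, hδ fun i ↦ g ⟨p i, p_mem i⟩, ?_⟩
  have p_surjective : Function.Surjective fun i ↦ (⟨p i, p_mem i⟩ : S) := by
    rintro ⟨a, ha⟩
    obtain ⟨i, rfl⟩ : a ∈ Set.range p := hSp ▸ mem_coe.2 ha
    exact ⟨i, rfl⟩
  rw [image_image, coe_image, coe_univ, Set.image_univ, ← p_surjective.range_comp]
  rfl

namespace IsStablePattern

lemma maxInducedEdges_blowup_le [T2Space V] [Infinite V] (hG : IsStablePattern G) (hk : 2 ≤ k)
    (n m : ℕ) : maxInducedEdges (copies G) n * m ^ k + n * maxInducedEdges (copies G) m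
      ≤ maxInducedEdges (copies G) (n * m) := by
  classical
  obtain ⟨P, rfl, hPmax⟩ := exists_card_inducedEdges_eq_maxInducedEdges (copies G) n
  obtain ⟨Q, rfl, hQmax⟩ := exists_card_inducedEdges_eq_maxInducedEdges (copies G) m
  have copies_sized := sized_copies hG.injective
  have transversals_mem : ∀ᶠ δ : ℝ in 𝓝[>] 0, ∀ S ∈ inducedEdges (copies G) P,
      ∀ U ∈ transversals S Q, U.image (blowupMap δ) ∈ copies G :=
    (eventually_all_finset _).2 fun S hS ↦ nhdsWithin_le_nhds <|
      eventually_image_blowupMap_transversal_mem_copies hG.isOpen (mem_inducedEdges.1 hS).2 Q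
  obtain ⟨δ, ⟨hinj, htrans⟩, hδ⟩ :=
    (((eventually_injOn_blowupMap P Q).and transversals_mem).and self_mem_nhdsWithin).exists
  have edges_nonempty : ∀ S ∈ inducedEdges (copies G) Q, S.Nonempty := fun S hS ↦ by
    rw [← card_pos, copies_sized (mem_inducedEdges.1 hS).2]
    lia
  have card_edges := card_blowupEdges (P := P) (E₁ := inducedEdges (copies G) P) (Q := Q)
    (by lia : k ≠ 1) (fun S hS ↦ copies_sized (mem_inducedEdges.1 hS).2) edges_nonempty
  rw [← hPmax, ← hQmax, ← card_edges, ← card_product]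
  refine card_le_maxInducedEdges_of_injOn hinj (fun U hU ↦ ?_) (fun U hU ↦ ?_)
  · exact subset_product_of_mem_blowupEdges (fun S hS ↦ (mem_inducedEdges.1 hS).1)
      (fun S hS ↦ (mem_inducedEdges.1 hS).1) hU
  · obtain ⟨S, hS, hU⟩ | ⟨p, -, S, hS, rfl⟩ := mem_blowupEdges.1 hU
    · exact htrans S hS U hU
    · exact image_blowupMap_column_mem_copies (fun t ht ↦ hG.add_smul_mem t ht p δ hδ)
        (mem_inducedEdges.1 hS).2

theorem exists_tendsto_maxInducedEdges_div_pow [T2Space V] [Infinite V] (hG : IsStablePattern G)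
    (hk : 2 ≤ k) (hne : G.Nonempty) :
    ∃ L : ℝ, 1 / ((k : ℝ) ^ k - k) ≤ L ∧
      Tendsto (fun n : ℕ ↦ (maxInducedEdges (copies G) n : ℝ) / (n : ℝ) ^ k) atTop (𝓝 L) ∧
      ∀ n : ℕ, (maxInducedEdges (copies G) n : ℝ) ≤ L * ((n : ℝ) ^ k - n) ∧
        L * n.descFactorial k ≤ maxInducedEdges (copies G) n := by
  classical
  have copies_sized := sized_copies hG.injective
  obtain ⟨L, hL, lower⟩ := exists_tendsto_div_pow_of_averaging (k := k)
    (h := fun n ↦ (maxInducedEdges (copies G) n : ℝ)) (fun n ↦ Nat.cast_nonneg _)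
    fun n ↦ by exact_mod_cast sub_mul_maxInducedEdges_succ_le copies_sized n
  have upper := le_mul_pow_sub_of_blowup (by lia) hL
    fun n m ↦ by exact_mod_cast hG.maxInducedEdges_blowup_le hk n m
  refine ⟨L, ?_, hL, fun n ↦ ⟨upper n, lower n⟩⟩
  obtain ⟨p, hp⟩ := hne
  have one_le : 1 ≤ maxInducedEdges (copies G) k := by
    have := one_le_maxInducedEdges_of_mem (image_univ_mem_copies hp)
    rwa [copies_sized (image_univ_mem_copies hp)] at this
  have pow_sub_pos : (0 : ℝ) < (k : ℝ) ^ k - k := by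
    have : k < k ^ k := lt_self_pow₀ (by lia) (by lia)
    exact sub_pos.2 (by exact_mod_cast this)
  rw [div_le_iff₀ pow_sub_pos]
  exact (by exact_mod_cast one_le : (1 : ℝ) ≤ _).trans (upper k)

end IsStablePattern

end StablePatterns

section Triangles

variable {p T : Fin 3 → Plane} {ε : ℝ}

/-- The triples forming a triangle `ε`-similar to `T`. -/
def similarTriangles (ε : ℝ) (T : Fin 3 → Plane) : Set (Fin 3 → Plane) :=
  {p | IsTriangle p ∧ EpsSimilar ε p T}

lemma isTriangle_iff_affineIndependent : IsTriangle p ↔ AffineIndependent ℝ p :=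
  affineIndependent_iff_not_collinear.symm

lemma continuousAt_triAngle (hp : Function.Injective p) (i : Fin 3) :
    ContinuousAt (fun q ↦ triAngle q i) p := by
  have succ_ne : p (i + 1) ≠ p i := hp.ne (by fin_cases i <;> decide)
  have succ_succ_ne : p (i + 2) ≠ p i := hp.ne (by fin_cases i <;> decide)
  exact ContinuousAt.comp (f := fun q : Fin 3 → Plane ↦ (q (i + 1), q i, q (i + 2)))
    (continuousAt_angle succ_ne succ_succ_ne) (by fun_prop)

lemma isOpen_similarTriangles (ε : ℝ) (T : Fin 3 → Plane) : IsOpen (similarTriangles ε T) := by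
  refine isOpen_iff_mem_nhds.2 ?_
  rintro p ⟨hp, σ, hσ⟩
  rw [isTriangle_iff_affineIndependent] at hp
  have angles_near (i : Fin 3) : ∀ᶠ q in nhds p, |triAngle q i - triAngle T (σ i)| < ε :=
    ((continuousAt_triAngle hp.injective i).sub continuousAt_const).abs.eventually_lt
      continuousAt_const (hσ i)
  filter_upwards [isOpen_setOfPred_affineIndependent.mem_nhds hp,
    Filter.eventually_all.2 angles_near] with q hq hqσ
  exact ⟨isTriangle_iff_affineIndependent.2 hq, σ, hqσ⟩

lemma triAngle_add_smul (p : Fin 3 → Plane) (a : Plane) {δ : ℝ} (hδ : δ ≠ 0) (i : Fin 3) :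
    triAngle (fun j ↦ a + δ • p j) i = triAngle p i := by
  simp only [triAngle, angle_const_add]
  simp only [angle, vsub_eq_sub, ← smul_sub, InnerProductGeometry.angle_smul_smul hδ]

lemma IsTriangle.add_smul (hp : IsTriangle p) (a : Plane) {δ : ℝ} (hδ : δ ≠ 0) :
    IsTriangle fun i ↦ a + δ • p i := by
  rw [isTriangle_iff_affineIndependent] at hp ⊢
  exact (hp.smul (a := Units.mk0 δ hδ)).vadd (v := a)

lemma isStablePattern_similarTriangles (ε : ℝ) (T : Fin 3 → Plane) :
    IsStablePattern (similarTriangles ε T) where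
  isOpen := isOpen_similarTriangles ε T
  injective _ hp := (isTriangle_iff_affineIndependent.1 hp.1).injective
  add_smul_mem := by
    rintro p ⟨hp, σ, hσ⟩ a δ hδ
    exact ⟨hp.add_smul a hδ.ne', σ, fun i ↦ by rw [triAngle_add_smul p a hδ.ne']; exact hσ i⟩

lemma IsTriangle.mem_similarTriangles_self (hT : IsTriangle T) (hε : 0 < ε) :
    T ∈ similarTriangles ε T :=
  ⟨hT, Equiv.refl _, fun i ↦ by simpa using hε⟩

lemma simCount_eq_card_inducedEdges (ε : ℝ) (T : Fin 3 → Plane) (P : Finset Plane) :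
    simCount ε T P = (inducedEdges (copies (similarTriangles ε T)) P).card := by
  have mem_copies_iff (S : Finset Plane) :
      S ∈ copies (similarTriangles ε T) ↔ FormsSimilar ε T S := by
    simp only [copies, similarTriangles, FormsSimilar, Set.mem_ofPred_eq]
    exact exists_congr fun _ ↦ and_comm
  have copies_sized := sized_copies (isStablePattern_similarTriangles ε T).injective
  rw [simCount, ← Set.ncard_coe_finset]
  congr 1 with S
  rw [Finset.mem_coe, mem_inducedEdges, Set.mem_ofPred_eq, ← mem_copies_iff]
  exact and_congr_right fun _ ↦ and_iff_right_of_imp (@copies_sized S)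

lemma hGeo_eq_maxInducedEdges (n : ℕ) (T : Fin 3 → Plane) (ε : ℝ) :
    hGeo n T ε = maxInducedEdges (copies (similarTriangles ε T)) n := by
  simp only [hGeo, maxInducedEdges, simCount_eq_card_inducedEdges]

lemma cast_descFactorial_three (n : ℕ) :
    (n.descFactorial 3 : ℝ) = n * (n - 1) * (n - 2) := by
  rw [← descPochhammer_eval_eq_descFactorial]
  simp [descPochhammer_succ_right]

end Triangles

theorem stmt_6_general (T : Fin 3 → Plane) (hT : IsTriangle T) (ε : ℝ) (hε : 0 < ε) :
    ∃ L : ℝ, 1 / 24 ≤ L ∧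
      Filter.Tendsto (fun n : ℕ => (hGeo n T ε : ℝ) / (n : ℝ) ^ 3)
        Filter.atTop (nhds L) ∧
      ∀ n : ℕ, (hGeo n T ε : ℝ) ≤ L * ((n : ℝ) ^ 3 - (n : ℝ)) ∧
        L * ((n : ℝ) * ((n : ℝ) - 1) * ((n : ℝ) - 2)) ≤ (hGeo n T ε : ℝ) := by
  have : Infinite Plane := Module.Free.infinite ℝ Plane
  obtain ⟨L, hL, tendsto, bounds⟩ :=
    (isStablePattern_similarTriangles ε T).exists_tendsto_maxInducedEdges_div_pow (by norm_num)
      ⟨T, hT.mem_similarTriangles_self hε⟩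
  simp only [← hGeo_eq_maxInducedEdges, cast_descFactorial_three] at tendsto bounds
  exact ⟨L, (by norm_num : (1 : ℝ) / 24 = _).trans_le hL, tendsto, bounds⟩

/-- For a non-degenerate triangle `T` and `0 < ε` smaller than every angle of `T`,
the sequence `h(n, T, ε)/n³` converges to some `L ≥ 1/24`, and
`L·(n³ - n) ≥ h(n, T, ε) ≥ L·n·(n-1)·(n-2)` for every `n`. -/
theorem stmt_6 (T : Fin 3 → Plane) (hT : IsTriangle T)
    (ε : ℝ) (hε : 0 < ε) (hεsmall : ∀ i : Fin 3, ε < triAngle T i) :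
    ∃ L : ℝ, 1 / 24 ≤ L ∧
      Filter.Tendsto (fun n : ℕ => (hGeo n T ε : ℝ) / (n : ℝ) ^ 3)
        Filter.atTop (nhds L) ∧
      ∀ n : ℕ, (hGeo n T ε : ℝ) ≤ L * ((n : ℝ) ^ 3 - (n : ℝ)) ∧
        L * ((n : ℝ) * ((n : ℝ) - 1) * ((n : ℝ) - 2)) ≤ (hGeo n T ε : ℝ) :=
  stmt_6_general T hT ε hε

end
end

section
/- For almost every pair (α, β) (with respect to Lebesgue measure on the set {(α, β) ∈ ℝ² : α > 0, β > 0, α + β < π}), the triangle T with angles α, β and π − α − β has the following property: there exists ε > 0 such that limsup_{n→∞} h(n, T, ε)/C(n, 3) ≤ 0.25072. -/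
open EuclideanGeometry

noncomputable section

/-!
Identify the plane with `ℂ` and measure a triple by its ratio `(c - a) / (b - a)`. For a triangle
with angles `α, β` this ratio is `ζ = apexRatio α β` or its conjugate, and for almost every
`(α, β)` the numbers `ζ, ζ̄` are algebraically independent over `ℤ`. A triple nearly similar to the
triangle satisfies a linear relation `c - a = t * (b - a)` with `t` near `ζ` or `ζ̄`.

By algebraic independence every `ζ` and `ζ̄` may be specialised to `-1` in `ZMod 3`, which turns the
relation into the symmetric `a + b + c = 0`: a minor of the linear system that survives the
specialisation is non-zero at `(ζ, ζ̄)`, hence also nearby. So if finitely many points, not all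
equal, solve the complex system, then the system over `ZMod 3` has a non-constant solution as well.
This is a coloring of the points in which every nearly similar triple is monochromatic or uses all
three colors. Splitting recursively along such colorings, `n` points contain at most
`(n ^ 3 - n) / 24` nearly similar triples. Since `ε` depends on the number of points, this is
applied to point sets of one fixed size and transferred to larger ones by averaging, at the cost of
an arbitrarily small loss in the density `1 / 4`.
-/

section Averaging

open Finset

variable {X : Type*}

open Classical in
/-- The number of edges inside `Q` of the `k`-uniform hypergraph whose edges are the `k`-element
sets satisfying `E`. -/
def edgeCount (k : ℕ) (E : Finset X → Prop) (Q : Finset X) : ℕ :=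
  #{S ∈ Q.powersetCard k | E S}

lemma card_filter_superset_powersetCard [DecidableEq X] {S P : Finset X} (hSP : S ⊆ P) {m : ℕ}
    (hm : #S ≤ m) :
    #{Q ∈ P.powersetCard m | S ⊆ Q} = (#P - #S).choose (m - #S) := by
  rw [← card_sdiff_of_subset hSP, ← card_powersetCard]
  refine card_nbij' (· \ S) (· ∪ S) (fun Q hQ ↦ ?_) (fun R hR ↦ ?_) (fun Q hQ ↦ ?_) (fun R hR ↦ ?_)
  · simp only [coe_filter, mem_powersetCard, Set.mem_ofPred_eq] at hQ
    obtain ⟨⟨hQP, hQm⟩, hSQ⟩ := hQ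
    simp [mem_powersetCard, sdiff_subset_sdiff hQP, card_sdiff_of_subset hSQ, hQm]
  · obtain ⟨hRP, hRm⟩ := mem_powersetCard.1 (mem_coe.1 hR)
    have hRS : Disjoint R S := disjoint_sdiff_self_left.mono_left hRP
    simp only [coe_filter, mem_powersetCard, Set.mem_ofPred_eq, card_union_of_disjoint hRS, hRm]
    exact ⟨⟨union_subset (hRP.trans sdiff_subset) hSP, by lia⟩, subset_union_right⟩
  · exact sdiff_union_of_subset (mem_filter.1 hQ).2
  · have hRS : Disjoint R S :=
      disjoint_sdiff_self_left.mono_left (mem_powersetCard.1 (mem_coe.1 hR)).1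
    exact union_sdiff_cancel_right hRS

lemma sum_edgeCount_powersetCard (E : Finset X → Prop) (P : Finset X) {k m : ℕ} (hkm : k ≤ m) :
    ∑ Q ∈ P.powersetCard m, edgeCount k E Q = edgeCount k E P * (#P - k).choose (m - k) := by
  classical
  calc ∑ Q ∈ P.powersetCard m, edgeCount k E Q
      = ∑ Q ∈ P.powersetCard m, #{S ∈ {S ∈ P.powersetCard k | E S} | S ⊆ Q} := by
        refine sum_congr rfl fun Q hQ ↦ congrArg card ?_
        ext S
        simp only [mem_filter, mem_powersetCard]
        have hQP := (mem_powersetCard.1 hQ).1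
        exact ⟨fun h ↦ ⟨⟨⟨h.1.1.trans hQP, h.1.2⟩, h.2⟩, h.1.1⟩,
          fun h ↦ ⟨⟨h.2, h.1.1.2⟩, h.1.2⟩⟩
    _ = ∑ S ∈ P.powersetCard k with E S, #{Q ∈ P.powersetCard m | S ⊆ Q} :=
        sum_card_bipartiteAbove_eq_sum_card_bipartiteBelow fun Q S : Finset X ↦ S ⊆ Q
    _ = edgeCount k E P * (#P - k).choose (m - k) := by
        refine sum_const_nat fun S hS ↦ ?_
        obtain ⟨hSP, rfl⟩ := mem_powersetCard.1 (mem_filter.1 hS).1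
        exact card_filter_superset_powersetCard hSP hkm

lemma edgeCount_le_mul_choose {E : Finset X → Prop} {P : Finset X} {k m : ℕ} {D : ℝ} (hkm : k ≤ m)
    (hmP : m ≤ #P) (hD : ∀ Q ⊆ P, #Q = m → (edgeCount k E Q : ℝ) ≤ D * m.choose k) :
    (edgeCount k E P : ℝ) ≤ D * (#P).choose k := by
  have hpos : (0 : ℝ) < (#P - k).choose (m - k) := mod_cast Nat.choose_pos (by lia)
  have hchoose : ((#P).choose m * m.choose k : ℝ) = (#P).choose k * (#P - k).choose (m - k) :=
    mod_cast Nat.choose_mul hkm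
  refine le_of_mul_le_mul_right ?_ hpos
  calc (edgeCount k E P * (#P - k).choose (m - k) : ℝ)
      = ∑ Q ∈ P.powersetCard m, (edgeCount k E Q : ℝ) :=
        mod_cast (sum_edgeCount_powersetCard E P hkm).symm
    _ ≤ #(P.powersetCard m) • (D * m.choose k) := by
        refine sum_le_card_nsmul _ _ _ fun Q hQ ↦ ?_
        exact hD Q (mem_powersetCard.1 hQ).1 (mem_powersetCard.1 hQ).2
    _ = D * ((#P).choose m * m.choose k) := by rw [card_powersetCard, nsmul_eq_mul]; ring
    _ = D * (#P).choose k * (#P - k).choose (m - k) := by rw [hchoose]; ring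

end Averaging

section ZeroSumColoring

open Finset

variable {X : Type*}

/-- `E` is zero-sum colorable on `Q` if `Q` has a non-constant coloring by `ZMod 3` in which the
colors of every three-element subset of `Q` satisfying `E` sum to zero. Every such subset is then
monochromatic or meets all three color classes. -/
def ZeroSumColorable (E : Finset X → Prop) (Q : Finset X) : Prop :=
  ∃ φ : X → ZMod 3, (∃ x ∈ Q, ∃ y ∈ Q, φ x ≠ φ y) ∧
    ∀ S ⊆ Q, #S = 3 → E S → ∑ x ∈ S, φ x = 0

lemma forall_eq_or_injOn_of_sum_eq_zero {S : Finset X} (hS : #S = 3) {φ : X → ZMod 3}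
    (h : ∑ x ∈ S, φ x = 0) : (∃ i, ∀ x ∈ S, φ x = i) ∨ Set.InjOn φ S := by
  classical
  have hzmod : ∀ i j k : ZMod 3, i + j + k = 0 → (j = i ∧ k = i) ∨ (i ≠ j ∧ i ≠ k ∧ j ≠ k) := by
    decide
  obtain ⟨a, b, c, hab, hac, hbc, rfl⟩ := card_eq_three.1 hS
  rw [sum_insert (by simp [hab, hac]), sum_pair hbc, ← add_assoc] at h
  rcases hzmod _ _ _ h with ⟨hb, hc⟩ | ⟨hab', hac', hbc'⟩
  · exact .inl ⟨φ a, by simp [hb, hc]⟩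
  · right
    simp [Set.InjOn, hab', hac', hbc', hab'.symm, hac'.symm, hbc'.symm]

lemma mem_image_piFinset_of_injOn [DecidableEq X] {Q S : Finset X} (hSQ : S ⊆ Q) (hS : #S = 3)
    {φ : X → ZMod 3} (hφ : Set.InjOn φ S) :
    S ∈ (Fintype.piFinset fun i ↦ {x ∈ Q | φ x = i}).image (univ.image ·) := by
  have hsurj : S.image φ = univ :=
    eq_univ_of_card _ (by rw [card_image_of_injOn hφ, hS, ZMod.card])
  have hex : ∀ i, ∃ x ∈ S, φ x = i := fun i ↦ mem_image.1 (hsurj ▸ mem_univ i)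
  choose f hfS hfφ using hex
  have hf : univ.image f = S := by
    refine eq_of_subset_of_card_le (image_subset_iff.2 fun i _ ↦ hfS i) ?_
    rw [card_image_of_injective _ (Function.LeftInverse.injective hfφ), hS, card_univ, ZMod.card]
  exact mem_image.2
    ⟨f, Fintype.mem_piFinset.2 fun i ↦ mem_filter.2 ⟨hSQ (hfS i), hfφ i⟩, hf⟩

lemma edgeCount_three_le_of_sum_eq_zero {E : Finset X → Prop} {Q : Finset X} {φ : X → ZMod 3}
    (hφ : ∀ S ⊆ Q, #S = 3 → E S → ∑ x ∈ S, φ x = 0) :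
    edgeCount 3 E Q ≤
      ∑ i, edgeCount 3 E {x ∈ Q | φ x = i} + ∏ i, #{x ∈ Q | φ x = i} := by
  classical
  have hsub : {S ∈ Q.powersetCard 3 | E S} ⊆
      (univ.biUnion fun i ↦ {S ∈ {x ∈ Q | φ x = i}.powersetCard 3 | E S}) ∪
        (Fintype.piFinset fun i ↦ {x ∈ Q | φ x = i}).image (univ.image ·) := by
    intro S hS
    obtain ⟨hSmem, hES⟩ := mem_filter.1 hS
    obtain ⟨hSQ, hS3⟩ := mem_powersetCard.1 hSmem
    rcases forall_eq_or_injOn_of_sum_eq_zero hS3 (hφ S hSQ hS3 hES) with ⟨i, hi⟩ | hinj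
    · refine mem_union_left _ (mem_biUnion.2 ⟨i, mem_univ i, ?_⟩)
      have hSi : S ⊆ {x ∈ Q | φ x = i} := fun x hx ↦ mem_filter.2 ⟨hSQ hx, hi x hx⟩
      exact mem_filter.2 ⟨mem_powersetCard.2 ⟨hSi, hS3⟩, hES⟩
    · exact mem_union_right _ (mem_image_piFinset_of_injOn hSQ hS3 hinj)
  refine (card_le_card hsub).trans ((card_union_le _ _).trans (add_le_add card_biUnion_le ?_))
  exact card_image_le.trans_eq (Fintype.card_piFinset _)

lemma twenty_four_mul_mul_add_cubes_le (a b c : ℕ) :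
    24 * (a * b * c) + a ^ 3 + b ^ 3 + c ^ 3 ≤ (a + b + c) ^ 3 := by
  zify
  nlinarith [mul_nonneg (Int.natCast_nonneg a) (sq_nonneg ((b : ℤ) - c)),
    mul_nonneg (Int.natCast_nonneg b) (sq_nonneg ((a : ℤ) - c)),
    mul_nonneg (Int.natCast_nonneg c) (sq_nonneg ((a : ℤ) - b))]

/- The bound `(n ^ 3 - n) / 24` solves the recursion `f n = (n / 3) ^ 3 + 3 * f (n / 3)`, `f 1 = 0`
of the balanced iterated tripartite construction. -/
lemma edgeCount_three_le_of_zeroSumColorable {E : Finset X → Prop} (P : Finset X)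
    (hP : ∀ Q ⊆ P, 2 ≤ #Q → ZeroSumColorable E Q) :
    24 * edgeCount 3 E P + #P ≤ #P ^ 3 := by
  induction P using Finset.strongInduction with
  | H P ih =>
  rcases lt_or_ge #P 2 with hP2 | hP2
  · have hzero : edgeCount 3 E P = 0 := by
      simp [edgeCount, powersetCard_eq_empty.2 (show #P < 3 by lia)]
    rw [hzero]
    interval_cases #P <;> simp
  obtain ⟨φ, ⟨x, hx, y, hy, hxy⟩, hφ⟩ := hP P subset_rfl hP2
  let F : ZMod 3 → Finset X := fun i ↦ {x ∈ P | φ x = i}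
  have hF : ∀ i, F i ⊂ P := by
    refine fun i ↦ filter_ssubset.2 ?_
    by_contra! hconst
    exact hxy ((hconst x hx).trans (hconst y hy).symm)
  have hFcount (i) : 24 * edgeCount 3 E (F i) + #(F i) ≤ #(F i) ^ 3 :=
    ih (F i) (hF i) fun Q hQ ↦ hP Q (hQ.trans (hF i).subset)
  have hcard : #(F 0) + #(F 1) + #(F 2) = #P :=
    (Fin.sum_univ_three fun i : ZMod 3 ↦ #(F i)).symm.trans
      (card_eq_sum_card_fiberwise fun _ _ ↦ mem_univ _).symm
  have hcount : edgeCount 3 E P ≤ edgeCount 3 E (F 0) + edgeCount 3 E (F 1) +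
      edgeCount 3 E (F 2) + #(F 0) * #(F 1) * #(F 2) :=
    (edgeCount_three_le_of_sum_eq_zero hφ).trans_eq (congrArg₂ _
      (Fin.sum_univ_three fun i : ZMod 3 ↦ edgeCount 3 E (F i))
      (Fin.prod_univ_three fun i : ZMod 3 ↦ #(F i)))
  have hcube := twenty_four_mul_mul_add_cubes_le #(F 0) #(F 1) #(F 2)
  rw [hcard] at hcube
  linarith [hFcount 0, hFcount 1, hFcount 2]

lemma exists_cube_sub_le_mul_choose_three {D : ℝ} (hD : 1 / 4 < D) :
    ∃ n : ℕ, 3 ≤ n ∧ ((n : ℝ) ^ 3 - n) / 24 ≤ D * n.choose 3 := by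
  obtain ⟨m, hm⟩ := exists_nat_gt (3 / (4 * D - 1))
  refine ⟨m + 3, by lia, ?_⟩
  have hm' : 3 < m * (4 * D - 1) := (div_lt_iff₀ (by linarith)).1 hm
  have hchoose : ((m + 3).choose 3 : ℝ) = (m + 3) * (m + 2) * (m + 1) / 6 := by
    rw [Nat.cast_choose_eq_descPochhammer_div]
    norm_num [descPochhammer_succ_eval, Nat.factorial]
    ring
  have hdiff : 0 ≤ ((m : ℝ) + 3) * (m + 2) * (m * (4 * D - 1) - 3) :=
    mul_nonneg (by positivity) (sub_nonneg.2 hm'.le)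
  rw [hchoose]
  push_cast
  nlinarith [hdiff]

theorem exists_forall_edgeCount_three_le_of_zeroSumColorable {D : ℝ} (hD : 1 / 4 < D) :
    ∃ N : ℕ, ∀ (E : Finset X → Prop) (P : Finset X), N ≤ #P →
      (∀ Q ⊆ P, 2 ≤ #Q → #Q ≤ N → ZeroSumColorable E Q) →
        (edgeCount 3 E P : ℝ) ≤ D * (#P).choose 3 := by
  obtain ⟨N, hN3, hN⟩ := exists_cube_sub_le_mul_choose_three hD
  refine ⟨N, fun E P hNP hcol ↦ edgeCount_le_mul_choose hN3 hNP fun Q hQP hQN ↦ ?_⟩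
  have hQ : 24 * edgeCount 3 E Q + N ≤ N ^ 3 := hQN ▸
    edgeCount_three_le_of_zeroSumColorable Q fun R hRQ hR ↦
      hcol R (hRQ.trans hQP) hR (hQN ▸ card_le_card hRQ)
  have hQ' : (24 * edgeCount 3 E Q + N : ℝ) ≤ N ^ 3 := mod_cast hQ
  linarith

end ZeroSumColoring

section Specialization

open Matrix MvPolynomial Topology

variable {A F K R ι m n : Type*} [CommRing A] [Field F] [Algebra A F] [Field K] [Algebra A K]

lemma aeval_comp_eq_zero_of_algebraicIndependent {z : ι → K} (hz : AlgebraicIndependent A z)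
    (κ : R → ι) (u : ι → F) {f : MvPolynomial R A} (hf : aeval (z ∘ κ) f = 0) :
    aeval (u ∘ κ) f = 0 := by
  have hrename : rename κ f = 0 :=
    (injective_iff_map_eq_zero _).1 hz _ (by rwa [aeval_rename])
  rw [← aeval_rename, hrename, map_zero]

lemma exists_det_submatrix_ne_zero [Finite m] [Fintype n] [DecidableEq n] {M : Matrix m n F}
    (hM : ∀ φ, M *ᵥ φ = 0 → φ = 0) : ∃ ρ : n → m, (M.submatrix ρ id).det ≠ 0 := by
  have := Fintype.ofFinite m
  have hspan : Submodule.span F (Set.range M.row) = ⊤ := by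
    have hcol : LinearIndependent F M.col :=
      mulVec_injective_iff.1 ((injective_iff_map_eq_zero M.mulVecLin).2 hM)
    refine Submodule.eq_top_of_finrank_eq ?_
    rw [← rank_eq_finrank_span_row, ← rank_transpose, hcol.rank_matrix, Module.finrank_pi]
  obtain ⟨κ, a, -, ha, hind⟩ := exists_linearIndependent' F M.row
  let b : Module.Basis κ F (n → F) := .mk hind (by rw [ha, hspan])
  let e : n ≃ κ := (Pi.basisFun F n).indexEquiv b
  refine ⟨a ∘ e, ?_⟩
  have hrow : LinearIndependent F (M.submatrix (a ∘ e) id).row := hind.comp e e.injective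
  exact ((isUnit_iff_isUnit_det _).1 (linearIndependent_rows_iff_isUnit.1 hrow)).ne_zero

theorem eventually_exists_ne_zero_mulVec_eq_zero [TopologicalSpace K] [IsTopologicalRing K]
    [T1Space K] [Finite m] [Fintype n] (M : Matrix m n (MvPolynomial R A)) {s : R → K} {u : R → F}
    (hsu : ∀ f : MvPolynomial R A, aeval s f = 0 → aeval u f = 0) :
    ∀ᶠ t in 𝓝 s, ∀ (I : Set m) (q : n → K), q ≠ 0 →
      (∀ i ∈ I, (M.map (aeval t) *ᵥ q) i = 0) →
        ∃ φ : n → F, φ ≠ 0 ∧ ∀ i ∈ I, (M.map (aeval u) *ᵥ φ) i = 0 := by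
  classical
  have hdet (ρ : n → m) : ∀ᶠ t in 𝓝 s, aeval u (M.submatrix ρ id).det ≠ 0 →
      aeval t (M.submatrix ρ id).det ≠ 0 := by
    by_cases hρ : aeval u (M.submatrix ρ id).det = 0
    · simp [hρ]
    · have hcont : Continuous fun t : R → K ↦ aeval t (M.submatrix ρ id).det := by
        simp_rw [aeval_def, ← eval_map]
        exact continuous_eval _
      filter_upwards [hcont.continuousAt.eventually_ne (mt (hsu _) hρ)] with t ht _ using ht
  filter_upwards [Filter.eventually_all.2 hdet] with t ht I q hq hI
  by_contra! hker
  obtain ⟨ρ, hρ⟩ : ∃ ρ : n → I, ((M.map (aeval u)).submatrix (fun j ↦ (ρ j : m)) id).det ≠ 0 := by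
    refine exists_det_submatrix_ne_zero (M := (M.map (aeval u)).submatrix ((↑) : I → m) id) ?_
    intro φ hφ
    by_contra hφ0
    obtain ⟨i, hiI, hi⟩ := hker φ hφ0
    exact hi (congrFun hφ ⟨i, hiI⟩)
  have hρt := ht (fun j ↦ ρ j) (by rwa [AlgHom.map_det])
  rw [AlgHom.map_det] at hρt
  exact hq (eq_zero_of_mulVec_eq_zero hρt (funext fun j ↦ hI _ (ρ j).2))

end Specialization

section NearlySimilar

open Matrix MvPolynomial

variable {K V ι : Type*}

/-- The polynomial matrix of the linear system `q v₀ = 0`, `q c - q a = X r * (q b - q a)` in the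
unknowns `q : V → K`, with one equation and one ratio variable `X r` for every
`r = (a, b, c, k)`; the label `k` records which of finitely many ratios `X r` will be near. -/
def ratioMatrix (ι : Type*) [DecidableEq V] (v₀ : V) :
    Matrix (Option (V × V × V × ι)) V (MvPolynomial (V × V × V × ι) ℤ)
  | none => Pi.single v₀ 1
  | some (a, b, c, k) =>
      Pi.single c 1 - Pi.single a 1 -
        (X (a, b, c, k) : MvPolynomial (V × V × V × ι) ℤ) • (Pi.single b 1 - Pi.single a 1)

section ratioMatrix

variable [Fintype V] [DecidableEq V] [CommRing K] (v₀ : V) (t : V × V × V × ι → K) (q : V → K)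

lemma ratioMatrix_map_aeval_mulVec_none :
    ((ratioMatrix ι v₀).map (aeval t) *ᵥ q) none = q v₀ := by
  simp [ratioMatrix, mulVec, dotProduct, Pi.single_apply, apply_ite]

lemma ratioMatrix_map_aeval_mulVec_some (a b c : V) (k : ι) :
    ((ratioMatrix ι v₀).map (aeval t) *ᵥ q) (some (a, b, c, k)) =
      q c - q a - t (a, b, c, k) * (q b - q a) := by
  have hrow : (fun v ↦ aeval t (ratioMatrix ι v₀ (some (a, b, c, k)) v)) =
      Pi.single c 1 - Pi.single a 1 - t (a, b, c, k) • (Pi.single b 1 - Pi.single a 1) := by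
    ext v
    simp [ratioMatrix, Pi.single_apply, apply_ite (aeval t)]
  change (fun v ↦ aeval t (ratioMatrix ι v₀ (some (a, b, c, k)) v)) ⬝ᵥ q = _
  rw [hrow]
  simp only [sub_dotProduct, smul_dotProduct, single_one_dotProduct, smul_eq_mul]

end ratioMatrix

/-- `(c - a) / (b - a)` is within `δ` of `z`. The multiplicative form keeps degenerate triples
meaningful: if `b = a`, it holds precisely when `c = a`. -/
def HasRatioNear [NormedField K] (z : K) (δ : ℝ) (a b c : K) : Prop :=
  ∃ t, dist t z < δ ∧ c - a = t * (b - a)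

variable [NormedField K] {z : ι → K} {δ : ℝ}

lemma exists_dist_lt_and_imp_eq_mul (hδ : 0 < δ) (z a b c : K) :
    ∃ t, dist t z < δ ∧ (HasRatioNear z δ a b c → c - a = t * (b - a)) := by
  by_cases h : HasRatioNear z δ a b c
  · exact h.imp fun t ht ↦ ⟨ht.1, fun _ ↦ ht.2⟩
  · exact ⟨z, by simpa using hδ, fun h' ↦ absurd h' h⟩

theorem exists_forall_exists_zmod_three_coloring [Finite V] [Finite ι]
    (hz : AlgebraicIndependent ℤ z) :
    ∃ δ > 0, ∀ p : V → K, (∃ i j, p i ≠ p j) →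
      ∃ φ : V → ZMod 3, (∃ i j, φ i ≠ φ j) ∧
        ∀ a b c k, HasRatioNear (z k) δ (p a) (p b) (p c) → φ a + φ b + φ c = 0 := by
  classical
  have := Fintype.ofFinite V
  have := Fintype.ofFinite ι
  rcases isEmpty_or_nonempty V with _ | ⟨⟨v₀⟩⟩
  · exact ⟨1, one_pos, fun p ⟨i, _⟩ ↦ isEmptyElim i⟩
  obtain ⟨δ, hδ, hsys⟩ := Metric.eventually_nhds_iff.1 <|
    eventually_exists_ne_zero_mulVec_eq_zero (ratioMatrix ι v₀) fun _ ↦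
      aeval_comp_eq_zero_of_algebraicIndependent hz (fun r : V × V × V × ι ↦ r.2.2.2)
        fun _ ↦ (-1 : ZMod 3)
  refine ⟨δ, hδ, fun p ⟨i, j, hij⟩ ↦ ?_⟩
  choose t htz htp using fun r : V × V × V × ι ↦
    exists_dist_lt_and_imp_eq_mul hδ (z r.2.2.2) (p r.1) (p r.2.1) (p r.2.2.1)
  let I : Set (Option (V × V × V × ι)) :=
    {o | ∀ r ∈ o, HasRatioNear (z r.2.2.2) δ (p r.1) (p r.2.1) (p r.2.2.1)}
  have hq : (fun v ↦ p v - p v₀) ≠ 0 := fun hq ↦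
    hij (sub_left_inj.1 ((congrFun hq i).trans (congrFun hq j).symm))
  have hqI : ∀ o ∈ I, ((ratioMatrix ι v₀).map (aeval t) *ᵥ fun v ↦ p v - p v₀) o = 0 := by
    rintro (_ | ⟨a, b, c, k⟩) hr
    · simp [ratioMatrix_map_aeval_mulVec_none]
    · rw [ratioMatrix_map_aeval_mulVec_some]
      linear_combination htp (a, b, c, k) (hr _ rfl)
  obtain ⟨φ, hφ0, hφI⟩ := hsys ((dist_pi_lt_iff hδ).2 htz) I _ hq hqI
  have hφv₀ : φ v₀ = 0 := by
    simpa [ratioMatrix_map_aeval_mulVec_none] using hφI none (by simp [I])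
  obtain ⟨v, hv⟩ := Function.ne_iff.1 hφ0
  refine ⟨φ, ⟨v, v₀, by rwa [hφv₀]⟩, fun a b c k hk ↦ ?_⟩
  have hrow := hφI (some (a, b, c, k)) (by rintro _ ⟨⟩; exact hk)
  rw [ratioMatrix_map_aeval_mulVec_some, Function.comp_apply] at hrow
  have hthree : (3 : ZMod 3) = 0 := by decide
  linear_combination hrow + φ a * hthree

lemma sum_of_card_triple_eq_three {X M : Type*} [DecidableEq X] [AddCommMonoid M] {a b c : X}
    (h : ({a, b, c} : Finset X).card = 3) (f : X → M) :
    ∑ x ∈ {a, b, c}, f x = f a + f b + f c := by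
  have hlt (x y : X) : ({x, y} : Finset X).card < 3 := Nat.lt_succ_of_le Finset.card_le_two
  obtain ⟨hab, hac, hbc⟩ : a ≠ b ∧ a ≠ c ∧ b ≠ c := by
    refine ⟨?_, ?_, ?_⟩ <;> rintro rfl <;> simp [(hlt _ _).ne] at h
  rw [Finset.sum_insert (by simp [hab, hac]), Finset.sum_pair hbc, ← add_assoc]

lemma exists_fin_range_eq {X : Type*} {Q : Finset X} (hQ : Q.Nonempty) {N : ℕ}
    (hN : Q.card ≤ N) : ∃ f : Fin N → X, Set.range f = Q := by
  have := hQ.to_subtype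
  obtain ⟨e⟩ : Nonempty (Q ↪ Fin N) :=
    Function.Embedding.nonempty_of_card_le (by simpa using hN)
  refine ⟨Subtype.val ∘ Function.invFun e, ?_⟩
  rw [(Function.invFun_surjective e.injective).range_comp, Subtype.range_coe]

theorem exists_forall_zeroSumColorable {X : Type*} [DecidableEq X] [Finite ι] [Nonempty ι]
    {e : X → K} (he : Function.Injective e) (hz : AlgebraicIndependent ℤ z) (N : ℕ) :
    ∃ δ > 0, ∀ E : Finset X → Prop,
      (∀ S, E S → ∃ a b c k, S = {a, b, c} ∧ HasRatioNear (z k) δ (e a) (e b) (e c)) →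
        ∀ Q : Finset X, 2 ≤ Q.card → Q.card ≤ N → ZeroSumColorable E Q := by
  obtain ⟨δ, hδ, hcol⟩ := exists_forall_exists_zmod_three_coloring (V := Fin N) hz
  refine ⟨δ, hδ, fun E hE Q hQ2 hQN ↦ ?_⟩
  obtain ⟨x, hx, y, hy, hxy⟩ := Finset.one_lt_card.1 hQ2
  obtain ⟨f, hf⟩ := exists_fin_range_eq ⟨x, hx⟩ hQN
  have hfQ (v : X) (hv : v ∈ Q) : ∃ i, f i = v := (hf ▸ hv : v ∈ Set.range f)
  obtain ⟨i, rfl⟩ := hfQ x hx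
  obtain ⟨j, rfl⟩ := hfQ y hy
  obtain ⟨φ, ⟨i', j', hφne⟩, hφ⟩ := hcol (e ∘ f) ⟨i, j, he.ne hxy⟩
  obtain ⟨k⟩ := ‹Nonempty ι›
  have hφf (i j) (hij : f i = f j) : φ i = φ j := by
    have hsum := hφ i i j k ⟨z k, by simpa using hδ, by simp [hij]⟩
    have hthree : (3 : ZMod 3) = 0 := by decide
    linear_combination φ i * hthree - hsum
  have : Nonempty (Fin N) := ⟨i⟩
  have hψ (i) : φ (Function.invFun f (f i)) = φ i := hφf _ _ (Function.invFun_eq ⟨i, rfl⟩)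
  have hfmem (i) : f i ∈ Q := by simpa [hf] using Set.mem_range_self (f := f) i
  refine ⟨φ ∘ Function.invFun f, ⟨f i', hfmem i', f j', hfmem j', by simpa [hψ]⟩, ?_⟩
  intro S hSQ hS3 hES
  obtain ⟨a, b, c, l, rfl, habc⟩ := hE S hES
  obtain ⟨i, rfl⟩ := hfQ a (hSQ (by simp))
  obtain ⟨j, rfl⟩ := hfQ b (hSQ (by simp))
  obtain ⟨k, rfl⟩ := hfQ c (hSQ (by simp))
  rw [sum_of_card_triple_eq_three hS3]
  simpa only [Function.comp_apply, hψ] using hφ i j k l habc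

end NearlySimilar

section AlgebraicIndependence

open MeasureTheory Set

variable {R A : Type*} [CommRing R] [CommRing A] [Algebra R A]

lemma algebraicIndependent_pair_iff {x y : A} :
    AlgebraicIndependent R ![x, y] ↔
      Transcendental R y ∧ Transcendental (Algebra.adjoin R {y}) x := by
  have himage : ![x, y] '' {0}ᶜ = {y} := by
    rw [show ({0}ᶜ : Set (Fin 2)) = {1} by ext i; fin_cases i <;> simp, Set.image_singleton]
    rfl
  have : Unique {i : Fin 2 // i ≠ 0} := ⟨⟨⟨1, one_ne_zero⟩⟩, by decide⟩
  rw [AlgebraicIndependent.iff_transcendental_adjoin_image 0, himage,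
    algebraicIndependent_singleton_iff ⟨1, one_ne_zero⟩]
  rfl

lemma algebraicIndependent_pair_swap {x y : A} :
    AlgebraicIndependent R ![x, y] ↔ AlgebraicIndependent R ![y, x] :=
  algebraicIndependent_equiv' (Equiv.swap 0 1) (by ext i; fin_cases i <;> rfl)

lemma algebraicIndependent_mul_pair [IsDomain A] {x y : A}
    (h : AlgebraicIndependent R ![x, y]) : AlgebraicIndependent R ![x * y, y] := by
  obtain ⟨hy, hx⟩ := algebraicIndependent_pair_iff.1 h
  have := (algebraMap R A).domain_nontrivial
  have hy0 : y ≠ 0 := by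
    rintro rfl
    exact hy isAlgebraic_zero
  refine algebraicIndependent_pair_iff.2 ⟨hy, fun hxy ↦ hx ?_⟩
  refine .of_mul (mem_nonZeroDivisors_of_ne_zero hy0) ?_ (mul_comm x y ▸ hxy)
  exact isAlgebraic_algebraMap (A := A) (⟨y, Algebra.self_mem_adjoin_singleton R y⟩ :
    Algebra.adjoin R {y})

instance countable_adjoin [Countable R] (s : Set A) [Countable s] :
    Countable (Algebra.adjoin R s) := by
  rw [← Cardinal.mk_le_aleph0_iff, ← Cardinal.lift_le_aleph0]
  exact (Algebra.lift_cardinalMk_adjoin_le R s).trans (by simp)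

lemma measurableSet_algebraicIndependent {ι K : Type*} [Countable ι] [Countable R]
    [CommRing K] [Algebra R K] [TopologicalSpace K] [IsTopologicalSemiring K] [T1Space K]
    [SecondCountableTopology K] [MeasurableSpace K] [BorelSpace K] :
    MeasurableSet {x : ι → K | AlgebraicIndependent R x} := by
  have hcount : Countable (MvPolynomial ι R) := by
    rw [← Cardinal.mk_le_aleph0_iff]
    exact MvPolynomial.cardinalMk_le_max_lift.trans (by simp)
  simp only [algebraicIndependent_iff, MvPolynomial.aeval_def, ← MvPolynomial.eval_map,
    ofPred_forall]
  refine MeasurableSet.iInter fun f ↦ MeasurableSet.imp ?_ (.const _)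
  exact (MvPolynomial.continuous_eval _).measurable (measurableSet_singleton 0)

lemma ae_transcendental_of_injOn {X : Type*} [MeasurableSpace X] {μ : Measure X}
    [NullSingletonClass μ] [IsDomain R] [IsDomain A] [Module.IsTorsionFree R A] [Countable R]
    {f : X → A} {s : Set X} (hf : InjOn f s) : ∀ᵐ x ∂μ, x ∈ s → Transcendental R (f x) := by
  have hcount : (s ∩ f ⁻¹' {a | IsAlgebraic R a}).Countable :=
    MapsTo.countable_of_injOn (f := f) (fun _ hx ↦ hx.2) (hf.mono inter_subset_left)
      (Algebraic.countable R A)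
  filter_upwards [hcount.ae_notMem μ] with x hx hxs halg using hx ⟨hxs, halg⟩

end AlgebraicIndependence

section ApexRatio

open Complex MeasureTheory Set
open scoped Real ComplexConjugate

/-- The third vertex `ζ` of the triangle with vertices `0, 1, ζ`, `ζ` in the upper half-plane, whose
angles at `0` and `1` are `α` and `β`. -/
def apexRatio (α β : ℝ) : ℂ := (Real.sin β / Real.sin (α + β) : ℝ) * exp (α * I)

lemma apexRatio_eq_exp_mul_conj (α β : ℝ) :
    apexRatio α β = Circle.exp (2 * α) * conj (apexRatio α β) := by
  rw [apexRatio, Circle.coe_exp, map_mul, conj_ofReal, ← exp_conj, map_mul, conj_I, conj_ofReal,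
    mul_left_comm, ← exp_add]
  congr 2
  push_cast
  ring

lemma measurable_apexRatio : Measurable fun p : ℝ × ℝ ↦ apexRatio p.1 p.2 := by
  unfold apexRatio
  fun_prop

lemma continuousAt_apexRatio {p : ℝ × ℝ} (hp : Real.sin (p.1 + p.2) ≠ 0) :
    ContinuousAt (fun p : ℝ × ℝ ↦ apexRatio p.1 p.2) p := by
  unfold apexRatio
  fun_prop (disch := assumption)

lemma injOn_apexRatio {α : ℝ} (hα : α ∈ Ioo 0 π) : InjOn (apexRatio α) (Ioo 0 (π - α)) := by
  intro β ⟨hβ0, hβ⟩ γ ⟨hγ0, hγ⟩ h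
  have hratio : Real.sin β / Real.sin (α + β) = Real.sin γ / Real.sin (α + γ) :=
    ofReal_injective (mul_right_cancel₀ (exp_ne_zero _) h)
  have hsinα : 0 < Real.sin α := Real.sin_pos_of_mem_Ioo hα
  have hsinβ : 0 < Real.sin (α + β) :=
    Real.sin_pos_of_pos_of_lt_pi (by linarith [hα.1]) (by linarith)
  have hsinγ : 0 < Real.sin (α + γ) :=
    Real.sin_pos_of_pos_of_lt_pi (by linarith [hα.1]) (by linarith)
  rw [div_eq_div_iff hsinβ.ne' hsinγ.ne', Real.sin_add, Real.sin_add] at hratio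
  have hsub : Real.sin (β - γ) = 0 := by
    refine (mul_eq_zero.1 ?_).resolve_left hsinα.ne'
    rw [Real.sin_sub]
    linear_combination hratio
  have := (Real.sin_eq_zero_iff_of_lt_of_lt (by linarith [hα.1]) (by linarith [hα.1])).1 hsub
  linarith

lemma injOn_circleExp_two_mul : InjOn (fun α : ℝ ↦ (Circle.exp (2 * α) : ℂ)) (Ioo 0 π) := by
  refine Circle.coe_injective.injOn.comp (t := univ) ?_ (mapsTo_univ _ _)
  refine (Circle.exp_injOn_Ico (a := 0) (b := 2 * π) (by simp)).comp
    (mul_right_injective₀ two_ne_zero).injOn fun α hα ↦ ?_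
  exact ⟨by linarith [hα.1], by linarith [hα.2]⟩

lemma algebraicIndependent_apexRatio_conj {α β : ℝ}
    (hα : Transcendental ℤ (Circle.exp (2 * α) : ℂ))
    (hβ : Transcendental (Algebra.adjoin ℤ {(Circle.exp (2 * α) : ℂ)}) (conj (apexRatio α β))) :
    AlgebraicIndependent ℤ ![apexRatio α β, conj (apexRatio α β)] := by
  have h := algebraicIndependent_mul_pair <|
    algebraicIndependent_pair_swap.1 (algebraicIndependent_pair_iff.2 ⟨hα, hβ⟩)
  rwa [← apexRatio_eq_exp_mul_conj] at h

lemma measurableSet_angles :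
    MeasurableSet {p : ℝ × ℝ | 0 < p.1 ∧ 0 < p.2 ∧ p.1 + p.2 < π} :=
  (measurableSet_lt measurable_const measurable_fst).inter <|
    (measurableSet_lt measurable_const measurable_snd).inter <|
      measurableSet_lt (measurable_fst.add measurable_snd) measurable_const

theorem ae_algebraicIndependent_apexRatio_conj :
    ∀ᵐ p : ℝ × ℝ, p ∈ {p : ℝ × ℝ | 0 < p.1 ∧ 0 < p.2 ∧ p.1 + p.2 < π} →
      AlgebraicIndependent ℤ ![apexRatio p.1 p.2, conj (apexRatio p.1 p.2)] := by
  have hmeas : Measurable fun p : ℝ × ℝ ↦ ![apexRatio p.1 p.2, conj (apexRatio p.1 p.2)] := by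
    have := measurable_apexRatio
    refine measurable_pi_iff.2 fun i ↦ ?_
    fin_cases i
    · exact this
    · exact continuous_conj.measurable.comp this
  refine (Measure.ae_prod_iff_ae_ae <|
    measurableSet_angles.imp (hmeas measurableSet_algebraicIndependent)).2 ?_
  filter_upwards [ae_transcendental_of_injOn (R := ℤ) injOn_circleExp_two_mul] with α hα
  by_cases hα' : α ∈ Ioo 0 π
  · have hinj : InjOn (fun β ↦ conj (apexRatio α β)) (Ioo 0 (π - α)) :=
      (RingHom.injective _).comp_injOn (injOn_apexRatio hα')
    filter_upwards [ae_transcendental_of_injOn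
      (R := Algebra.adjoin ℤ {(Circle.exp (2 * α) : ℂ)}) hinj] with β hβ hp
    exact algebraicIndependent_apexRatio_conj (hα hα') (hβ ⟨hp.2.1, by linarith [hp.2.2]⟩)
  · exact .of_forall fun β hp ↦ absurd ⟨hp.1, by linarith [hp.2.1, hp.2.2]⟩ hα'

end ApexRatio

section Geometry

open Complex
open scoped Real ComplexConjugate

lemma eq_norm_mul_exp_abs_arg_or_eq_conj (z : ℂ) :
    z = ‖z‖ * exp (|z.arg| * I) ∨ z = conj (‖z‖ * exp (|z.arg| * I)) := by
  rcases le_total 0 z.arg with harg | harg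
  · exact .inl (by rw [abs_of_nonneg harg, norm_mul_exp_arg_mul_I])
  · right
    rw [abs_of_nonpos harg, map_mul, conj_ofReal, ← exp_conj, map_mul, conj_ofReal, conj_I]
    simp [norm_mul_exp_arg_mul_I]

lemma div_sub_sub_eq_apexRatio_or_eq_conj {a b c : ℂ} (h : ¬ Collinear ℝ {a, b, c}) :
    (c - a) / (b - a) = apexRatio (∠ b a c) (∠ c b a) ∨
      (c - a) / (b - a) = conj (apexRatio (∠ b a c) (∠ c b a)) := by
  have hba : b ≠ a := (ne₁₂_of_not_collinear h).symm
  have hca : c ≠ a := (ne₁₃_of_not_collinear h).symm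
  have harg : |((c - a) / (b - a)).arg| = ∠ b a c := by
    rw [← angle_eq_abs_arg (sub_ne_zero.2 hca) (sub_ne_zero.2 hba), angle_comm]
    rfl
  have hsum : ∠ a c b = π - (∠ b a c + ∠ c b a) := by
    linarith [angle_add_angle_add_angle_eq_pi b hca, angle_comm b a c]
  have hnorm : ‖(c - a) / (b - a)‖ = Real.sin (∠ c b a) / Real.sin (∠ b a c + ∠ c b a) := by
    have hsine := dist_eq_dist_mul_sin_angle_div_sin_angle
      (show ¬ Collinear ℝ {a, c, b} by rwa [Set.pair_comm])
    rw [hsum, Real.sin_pi_sub] at hsine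
    rw [norm_div, ← dist_eq_norm, ← dist_eq_norm, dist_comm c, hsine]
    field [dist_ne_zero.2 hba]
  simpa only [apexRatio, harg, hnorm] using
    eq_norm_mul_exp_abs_arg_or_eq_conj ((c - a) / (b - a))

lemma not_collinear_map_of_isTriangle {q : Fin 3 → Plane} (hq : IsTriangle q)
    (e : Plane ≃ₗᵢ[ℝ] ℂ) : ¬ Collinear ℝ {e (q 0), e (q 1), e (q 2)} := by
  have hind : AffineIndependent ℝ (e ∘ q) :=
    e.toAffineIsometryEquiv.toAffineEquiv.affineIndependent_iff.2
      (affineIndependent_iff_not_collinear.2 hq)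
  exact (affineIndependent_iff_not_collinear_of_ne (p := e ∘ q) (i₁ := 0) (i₂ := 1) (i₃ := 2)
    (by decide) (by decide) (by decide)).1 hind

lemma triAngle_comp_perm (p : Fin 3 → Plane) (σ : Equiv.Perm (Fin 3)) (i : Fin 3) :
    triAngle (p ∘ σ) i = triAngle p (σ i) := by
  have hσ : ∀ (σ : Equiv.Perm (Fin 3)) (i : Fin 3),
      σ (i + 1) = σ i + 1 ∧ σ (i + 2) = σ i + 2 ∨ σ (i + 1) = σ i + 2 ∧ σ (i + 2) = σ i + 1 := by
    decide
  simp only [triAngle, Function.comp_apply]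
  rcases hσ σ i with ⟨h1, h2⟩ | ⟨h1, h2⟩
  · rw [h1, h2]
  · rw [h1, h2, angle_comm]

lemma exists_triangle_of_formsSimilar {ε : ℝ} {T : Fin 3 → Plane} {S : Finset Plane}
    (h : FormsSimilar ε T S) :
    ∃ q : Fin 3 → Plane, (S : Set Plane) = Set.range q ∧ IsTriangle q ∧
      ∀ i, |triAngle q i - triAngle T i| < ε := by
  obtain ⟨p, hSp, hp, σ, hσ⟩ := h
  have hrange : Set.range (p ∘ σ.symm) = Set.range p := σ.symm.surjective.range_comp p
  refine ⟨p ∘ σ.symm, hSp.trans hrange.symm, by rwa [IsTriangle, hrange], fun i ↦ ?_⟩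
  simpa [triAngle_comp_perm] using hσ (σ.symm i)

theorem exists_forall_hasRatioNear_of_formsSimilar (e : Plane ≃ₗᵢ[ℝ] ℂ) {α β δ : ℝ}
    (hsin : Real.sin (α + β) ≠ 0) (hδ : 0 < δ) :
    ∃ ε > 0, ∀ T, triAngle T 0 = α → triAngle T 1 = β → ∀ S, FormsSimilar ε T S →
      ∃ a b c k, S = {a, b, c} ∧
        HasRatioNear (![apexRatio α β, conj (apexRatio α β)] k) δ (e a) (e b) (e c) := by
  obtain ⟨ε, hε, hζ⟩ :=
    Metric.continuousAt_iff.1 (continuousAt_apexRatio (p := (α, β)) hsin) δ hδ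
  refine ⟨ε, hε, ?_⟩
  rintro T rfl rfl S hS
  obtain ⟨q, hSq, hq, hangle⟩ := exists_triangle_of_formsSimilar hS
  have hdist : dist (apexRatio (triAngle q 0) (triAngle q 1))
      (apexRatio (triAngle T 0) (triAngle T 1)) < δ :=
    hζ (x := (triAngle q 0, triAngle q 1)) (max_lt (hangle 0) (hangle 1))
  have hcol := not_collinear_map_of_isTriangle hq e
  have hne : e (q 1) - e (q 0) ≠ 0 := sub_ne_zero.2 (ne₁₂_of_not_collinear hcol).symm
  have hmap (a b c : Plane) : ∠ (e a) (e b) (e c) = ∠ a b c :=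
    e.toAffineIsometryEquiv.toAffineIsometry.angle_map a b c
  have hratio := div_sub_sub_eq_apexRatio_or_eq_conj hcol
  rw [div_eq_iff hne, div_eq_iff hne, hmap, hmap] at hratio
  have hS' : S = {q 0, q 1, q 2} := by
    apply Finset.coe_injective
    rw [hSq]
    ext
    simp [Fin.exists_fin_succ, eq_comm]
  rcases hratio with hratio | hratio
  · exact ⟨q 0, q 1, q 2, 0, hS', _, hdist, hratio⟩
  · exact ⟨q 0, q 1, q 2, 1, hS', _, (dist_conj_conj _ _).trans_lt hdist, hratio⟩

end Geometry

section Conclusion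

open Filter

lemma simCount_eq_edgeCount (ε : ℝ) (T : Fin 3 → Plane) (P : Finset Plane) :
    simCount ε T P = edgeCount 3 (FormsSimilar ε T) P := by
  classical
  rw [simCount, edgeCount, ← Set.ncard_coe_finset]
  congr 1
  ext S
  simp [and_assoc]

lemma hGeo_le_mul_choose {T : Fin 3 → Plane} {ε D : ℝ} {n : ℕ} (hD : 0 ≤ D)
    (h : ∀ P : Finset Plane, P.card = n → (simCount ε T P : ℝ) ≤ D * n.choose 3) :
    (hGeo n T ε : ℝ) ≤ D * n.choose 3 := by
  have hfloor : hGeo n T ε ≤ ⌊D * n.choose 3⌋₊ := by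
    refine csSup_le' ?_
    rintro _ ⟨P, hP, rfl⟩
    exact Nat.le_floor (h P hP)
  exact (Nat.cast_le.2 hfloor).trans (Nat.floor_le (by positivity))

lemma limsup_hGeo_div_choose_le {T : Fin 3 → Plane} {ε D : ℝ} (hD : 0 ≤ D) {N : ℕ}
    (h : ∀ P : Finset Plane, N ≤ P.card → (simCount ε T P : ℝ) ≤ D * P.card.choose 3) :
    limsup (fun n : ℕ ↦ (hGeo n T ε : ℝ) / n.choose 3) atTop ≤ D := by
  refine limsup_le_of_le (isCoboundedUnder_le_of_le _ (x := 0) fun n ↦ by positivity) ?_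
  filter_upwards [eventually_ge_atTop N] with n hn
  refine div_le_of_le_mul₀ (Nat.cast_nonneg _) hD (hGeo_le_mul_choose hD ?_)
  rintro P rfl
  exact h P hn

theorem stmt_10_general :
    ∀ᵐ p : ℝ × ℝ ∂(MeasureTheory.volume.restrict
        {q : ℝ × ℝ | 0 < q.1 ∧ 0 < q.2 ∧ q.1 + q.2 < Real.pi}),
      ∀ D : ℝ, 1 / 4 < D → ∃ ε : ℝ, 0 < ε ∧ ∀ T : Fin 3 → Plane,
        triAngle T 0 = p.1 → triAngle T 1 = p.2 →
          limsup (fun n : ℕ ↦ (hGeo n T ε : ℝ) / (Nat.choose n 3 : ℝ)) atTop ≤ D := by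
  rw [MeasureTheory.ae_restrict_iff' measurableSet_angles]
  filter_upwards [ae_algebraicIndependent_apexRatio_conj] with p hp hangles D hD
  obtain ⟨hα, hβ, hαβ⟩ := id hangles
  have hsin : Real.sin (p.1 + p.2) ≠ 0 :=
    (Real.sin_pos_of_pos_of_lt_pi (add_pos hα hβ) hαβ).ne'
  let e : Plane ≃ₗᵢ[ℝ] ℂ := Complex.orthonormalBasisOneI.repr.symm
  obtain ⟨N, hN⟩ := exists_forall_edgeCount_three_le_of_zeroSumColorable (X := Plane) hD
  obtain ⟨δ, hδ, hcol⟩ := exists_forall_zeroSumColorable e.injective (hp hangles) N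
  obtain ⟨ε, hε, hratio⟩ := exists_forall_hasRatioNear_of_formsSimilar e hsin hδ
  refine ⟨ε, hε, fun T h0 h1 ↦ limsup_hGeo_div_choose_le (N := N) (by linarith) fun P hP ↦ ?_⟩
  rw [simCount_eq_edgeCount]
  exact hN _ P hP fun Q _ hQ hQN ↦ hcol _ (hratio T h0 h1) Q hQ hQN

end Conclusion

/-- For almost every pair `(α, β)` of angles, any triangle `T` with angles
`α, β, π - α - β` satisfies: there is `ε > 0` with
`limsup h(n, T, ε)/C(n,3) ≤ 0.25072`. -/
theorem stmt_10 :
    ∀ᵐ p : ℝ × ℝ ∂(MeasureTheory.volume.restrict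
        {q : ℝ × ℝ | 0 < q.1 ∧ 0 < q.2 ∧ q.1 + q.2 < Real.pi}),
      ∀ T : Fin 3 → Plane, IsTriangle T →
        triAngle T 0 = p.1 → triAngle T 1 = p.2 →
        ∃ ε : ℝ, 0 < ε ∧
          Filter.limsup (fun n : ℕ => (hGeo n T ε : ℝ) / (Nat.choose n 3 : ℝ))
            Filter.atTop ≤ 0.25072 := by
  filter_upwards [stmt_10_general] with p hp T _ h0 h1
  obtain ⟨ε, hε, hlimsup⟩ := hp 0.25072 (by norm_num)
  exact ⟨ε, hε, hlimsup T h0 h1⟩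

end
end
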